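/- Let α, β ≥ -1/2. Then for all t > 0 and θ, φ ∈ [0,π], 𝓗_t^{α,β}(θ,φ) = ∫_{[-1,1]} ∫_{[-1,1]} Ψ^{α,β}(t,θ,φ,u,v) dΠ_α(u) dΠ_β(v). -/

import Mathlib

open MeasureTheory Real Set
open scoped ENNReal Classical

noncomputable def cab (α β : ℝ) : ℝ :=
  Real.Gamma (α + β + 2) / (2 ^ (α + β + 1) * Real.Gamma (α + 1) * Real.Gamma (β + 1))

noncomputable def F4 (a₁ a₂ b₁ b₂ x y : ℝ) : ℝ :=
  ∑' p : ℕ × ℕ,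
    (Polynomial.eval a₁ (ascPochhammer ℝ (p.1 + p.2)) *
      Polynomial.eval a₂ (ascPochhammer ℝ (p.1 + p.2))) /
    (Polynomial.eval b₁ (ascPochhammer ℝ p.1) * Polynomial.eval b₂ (ascPochhammer ℝ p.2) *
      (Nat.factorial p.1) * (Nat.factorial p.2)) * x ^ p.1 * y ^ p.2

noncomputable def Hker (α β t θ φ : ℝ) : ℝ :=
  cab α β * Real.sinh (t / 2) / Real.cosh (t / 2) ^ (α + β + 2) *
    F4 ((α + β + 2) / 2) ((α + β + 3) / 2) (α + 1) (β + 1)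
      ((Real.sin (θ / 2) * Real.sin (φ / 2) / Real.cosh (t / 2)) ^ 2)
      ((Real.cos (θ / 2) * Real.cos (φ / 2) / Real.cosh (t / 2)) ^ 2)

noncomputable def qf (θ φ u v : ℝ) : ℝ :=
  1 - u * Real.sin (θ / 2) * Real.sin (φ / 2) - v * Real.cos (θ / 2) * Real.cos (φ / 2)

noncomputable def Psi (α β t θ φ u v : ℝ) : ℝ :=
  cab α β * Real.sinh (t / 2) / (Real.cosh (t / 2) - 1 + qf θ φ u v) ^ (α + β + 2)

noncomputable def PsiE (α β t θ φ u v : ℝ) : ℝ :=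
  (Psi α β t θ φ u v + Psi α β t θ φ (-u) v + Psi α β t θ φ u (-v) +
    Psi α β t θ φ (-u) (-v)) / 4

noncomputable def PiMeas (ν : ℝ) : Measure ℝ :=
  if ν = -(1/2) then (2⁻¹ : ℝ≥0∞) • (Measure.dirac (-1) + Measure.dirac 1)
  else (volume.restrict (Icc (-1 : ℝ) 1)).withDensity
    (fun u => ENNReal.ofReal
      (Real.Gamma (ν + 1) / (Real.sqrt π * Real.Gamma (ν + 1/2)) * (1 - u ^ 2) ^ (ν - 1/2)))

noncomputable def PiFun (γ u : ℝ) : ℝ :=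
  Real.Gamma (γ + 1) / (Real.sqrt π * Real.Gamma (γ + 1/2)) *
    ∫ w in (0 : ℝ)..u, (1 - w ^ 2) ^ (γ - 1/2)

noncomputable def PiInt (ν : ℝ) (S : Set ℝ) (f : ℝ → ℝ) : ℝ :=
  if ν = -(1/2) then
    ((if (-1 : ℝ) ∈ S then f (-1) else 0) + (if (1 : ℝ) ∈ S then f 1 else 0)) / 2
  else ∫ u in S, f u *
    (Real.Gamma (ν + 1) / (Real.sqrt π * Real.Gamma (ν + 1/2)) * (1 - u ^ 2) ^ (ν - 1/2))

noncomputable def muab (α β : ℝ) : Measure ℝ :=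
  (volume.restrict (Icc (0 : ℝ) π)).withDensity
    (fun θ => ENNReal.ofReal (Real.sin (θ / 2) ^ (2 * α + 1) * Real.cos (θ / 2) ^ (2 * β + 1)))

def ballI (θ r : ℝ) : Set ℝ := Ioo (θ - r) (θ + r) ∩ Icc 0 π

/-!
With `A = sin (θ/2) sin (φ/2) / cosh (t/2)` and `B = cos (θ/2) cos (φ/2) / cosh (t/2)`, the kernel
`Ψ` is a constant multiple of `(1 - (uA + vB)) ^ (-(α + β + 2))`, and `|A| + |B| < 1` makes its
double binomial series in `uA` and `vB` converge absolutely, so that it may be integrated term by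
term. The measures `Π_ν` are symmetric, hence only the even moments survive; these are Beta
integrals after the substitution `x = u²`, and equal `(1/2)_n / (ν + 1)_n`. The duplication formula
`(a)_{2n} = 4ⁿ (a/2)_n ((a + 1)/2)_n`, applied to `a = α + β + 2` and to `(2n)! = (1)_{2n}`, turns
the resulting series into the one defining `F₄`.
-/

section BetaIntegral

lemma integral_rpow_mul_one_sub_rpow {a b : ℝ} (ha : 0 < a) (hb : 0 < b) :
    ∫ x in (0 : ℝ)..1, x ^ (a - 1) * (1 - x) ^ (b - 1) = ProbabilityTheory.beta a b := by
  have hcomplex : Complex.betaIntegral a b =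
      ((∫ x in (0 : ℝ)..1, x ^ (a - 1) * (1 - x) ^ (b - 1) : ℝ) : ℂ) := by
    rw [Complex.betaIntegral, ← intervalIntegral.integral_ofReal]
    refine intervalIntegral.integral_congr fun x hx => ?_
    rw [uIcc_of_le zero_le_one] at hx
    rw [Complex.ofReal_mul, Complex.ofReal_cpow hx.1, Complex.ofReal_cpow (sub_nonneg.2 hx.2)]
    push_cast
    rfl
  rw [ProbabilityTheory.beta_eq_betaIntegralReal a b ha hb, hcomplex, Complex.ofReal_re]

lemma integral_abs_mul_comp_sq (g : ℝ → ℝ) :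
    ∫ u, |u| * g (u ^ 2) = ∫ x in Ioi 0, g x := by
  have hsubst := integral_comp_rpow_Ioi_of_pos (g := g) two_pos
  have heven := integral_comp_abs (f := fun u => u * g (u ^ 2))
  simp only [sq_abs] at heven
  rw [heven, ← hsubst, ← integral_const_mul]
  refine setIntegral_congr_fun measurableSet_Ioi fun u _ => ?_
  norm_num [mul_assoc]

lemma integral_abs_rpow_mul_one_sub_sq_rpow {r s : ℝ} (hr : 0 < r) (hs : 0 < s) :
    ∫ u in Icc (-1 : ℝ) 1, |u| ^ (2 * r - 1) * (1 - u ^ 2) ^ (s - 1) =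
      ProbabilityTheory.beta r s := by
  rw [← integral_rpow_mul_one_sub_rpow hr hs, intervalIntegral.integral_of_le zero_le_one,
    ← Ioi_inter_Iic, ← setIntegral_indicator measurableSet_Iic, ← integral_abs_mul_comp_sq,
    ← integral_indicator measurableSet_Icc]
  refine integral_congr_ae ?_
  filter_upwards [Measure.ae_ne volume 0] with u hu
  have hmem : u ^ 2 ∈ Iic 1 ↔ u ∈ Icc (-1) 1 := by
    rw [mem_Iic, sq_le_one_iff_abs_le_one, abs_le, mem_Icc]
  by_cases hu1 : u ∈ Icc (-1) 1
  · have hpow : |u| ^ (2 * r - 1) = |u| * (u ^ 2) ^ (r - 1) := by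
      have habs : 0 < |u| := abs_pos.2 hu
      rw [← sq_abs, ← Real.rpow_natCast, ← Real.rpow_mul habs.le, mul_comm |u|,
        ← Real.rpow_add_one habs.ne']
      push_cast
      ring_nf
    rw [indicator_of_mem hu1, indicator_of_mem (hmem.2 hu1), hpow, mul_assoc]
  · rw [indicator_of_notMem hu1, indicator_of_notMem (hmem.not.2 hu1), mul_zero]

end BetaIntegral

section Pochhammer

lemma Gamma_add_natCast {x : ℝ} (hx : 0 < x) (n : ℕ) :
    Real.Gamma (x + n) = (ascPochhammer ℝ n).eval x * Real.Gamma x := by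
  induction n with
  | zero => simp
  | succ n ih =>
    rw [Nat.cast_succ, ← add_assoc, Real.Gamma_add_one (by positivity), ih,
      ascPochhammer_succ_eval]
    ring

lemma ascPochhammer_eval_two_mul {K : Type*} [Field K] [NeZero (2 : K)] (a : K) (n : ℕ) :
    (ascPochhammer K (2 * n)).eval a =
      4 ^ n * (ascPochhammer K n).eval (a / 2) * (ascPochhammer K n).eval ((a + 1) / 2) := by
  induction n with
  | zero => simp
  | succ n ih =>
    rw [mul_add, mul_one, ascPochhammer_succ_eval (2 * n + 1), ascPochhammer_succ_eval (2 * n), ih,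
      ascPochhammer_succ_eval n, ascPochhammer_succ_eval n]
    have : (2 : K) ≠ 0 := two_ne_zero
    push_cast
    field_simp
    ring

lemma cast_factorial_two_mul {K : Type*} [Field K] [NeZero (2 : K)] (n : ℕ) :
    ((2 * n).factorial : K) = 4 ^ n * (ascPochhammer K n).eval (1 / 2) * n.factorial := by
  rw [← ascPochhammer_eval_one, ascPochhammer_eval_two_mul, one_add_one_eq_two,
    div_self two_ne_zero, ascPochhammer_eval_one]

end Pochhammer

section PowerSeries

lemma sum_antidiagonal_mul_choose_nsmul {R : Type*} [CommSemiring R] (c : ℕ → R) (x y : R)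
    (n : ℕ) :
    ∑ q : Finset.HasAntidiagonal.antidiagonal n, c (q.1.1 + q.1.2) *
      ((q.1.1 + q.1.2).choose q.1.1 • (x ^ q.1.1 * y ^ q.1.2)) = c n * (x + y) ^ n := by
  rw [Finset.sum_coe_sort (Finset.HasAntidiagonal.antidiagonal n) fun q : ℕ × ℕ =>
    c (q.1 + q.2) * ((q.1 + q.2).choose q.1 • (x ^ q.1 * y ^ q.2)),
    (Commute.all x y).add_pow', Finset.mul_sum]
  refine Finset.sum_congr rfl fun q hq => ?_
  rw [Finset.HasAntidiagonal.mem_antidiagonal.1 hq]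

lemma hasSum_mul_choose_nsmul {R : Type*} [NormedCommRing R] [NormOneClass R] [CompleteSpace R]
    {c : ℕ → R} {x y s : R} (habs : Summable fun n => ‖c n‖ * (‖x‖ + ‖y‖) ^ n)
    (hs : HasSum (fun n => c n * (x + y) ^ n) s) :
    HasSum (fun p : ℕ × ℕ => c (p.1 + p.2) * ((p.1 + p.2).choose p.1 • (x ^ p.1 * y ^ p.2))) s := by
  have hmajorant : Summable fun p : ℕ × ℕ =>
      ‖c (p.1 + p.2)‖ * ((p.1 + p.2).choose p.1 • (‖x‖ ^ p.1 * ‖y‖ ^ p.2)) := by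
    rw [← Finset.HasAntidiagonal.sigmaAntidiagonalEquivProd.summable_iff,
      summable_sigma_of_nonneg fun _ => by dsimp; positivity]
    refine ⟨fun n => Summable.of_finite, habs.congr fun n => ?_⟩
    rw [tsum_fintype]
    exact (sum_antidiagonal_mul_choose_nsmul (fun n => ‖c n‖) ‖x‖ ‖y‖ n).symm
  have hsummable : Summable fun p : ℕ × ℕ =>
      c (p.1 + p.2) * ((p.1 + p.2).choose p.1 • (x ^ p.1 * y ^ p.2)) := by
    refine hmajorant.of_norm_bounded fun p => (norm_mul_le _ _).trans ?_
    gcongr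
    refine norm_nsmul_le.trans ?_
    rw [nsmul_eq_mul]
    gcongr
    exact (norm_mul_le _ _).trans
      (mul_le_mul (norm_pow_le _ _) (norm_pow_le _ _) (norm_nonneg _) (by positivity))
  have hsigma := Finset.HasAntidiagonal.sigmaAntidiagonalEquivProd.summable_iff.2 hsummable
  rw [← Finset.HasAntidiagonal.sigmaAntidiagonalEquivProd.hasSum_iff]
  refine hsigma.hasSum_iff.2 (hs.unique ?_).symm
  refine hsigma.hasSum.sigma fun n => ?_
  rw [← sum_antidiagonal_mul_choose_nsmul c x y n]
  exact hasSum_fintype _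

lemma hasSum_one_div_one_sub_rpow (a : ℝ) {x : ℝ} (hx : |x| < 1) :
    HasSum (fun n : ℕ => (ascPochhammer ℝ n).eval a / n.factorial * x ^ n)
      (1 / (1 - x) ^ a) := by
  have hseries := (Real.one_div_one_sub_rpow_hasFPowerSeriesOnBall_zero a).hasSum
    (y := x) (by simpa [enorm_eq_nnnorm, ← NNReal.coe_lt_one] using hx)
  rw [zero_add] at hseries
  refine hseries.congr_fun fun n => ?_
  have hchoose := Ring.factorial_nsmul_multichoose_eq_ascPochhammer a n
  rw [Polynomial.ascPochhammer_smeval_eq_eval, nsmul_eq_mul, Ring.multichoose_eq] at hchoose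
  rw [← hchoose, mul_div_cancel_left₀ _ (Nat.cast_ne_zero.2 n.factorial_ne_zero)]
  simp [FormalMultilinearSeries.ofScalars, mul_comm]

lemma hasSum_one_div_one_sub_add_rpow (a : ℝ) {x y : ℝ} (hxy : |x| + |y| < 1) :
    HasSum (fun p : ℕ × ℕ => (ascPochhammer ℝ (p.1 + p.2)).eval a /
      (p.1.factorial * p.2.factorial) * (x ^ p.1 * y ^ p.2)) (1 / (1 - (x + y)) ^ a) := by
  have habs : Summable fun n : ℕ =>
      ‖(ascPochhammer ℝ n).eval a / n.factorial‖ * (‖x‖ + ‖y‖) ^ n := by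
    have hr : |(|x| + |y|)| < 1 := by rwa [abs_of_nonneg (by positivity)]
    refine (hasSum_one_div_one_sub_rpow a hr).summable.norm.congr fun n => ?_
    rw [norm_mul, norm_pow, Real.norm_of_nonneg (by positivity : 0 ≤ |x| + |y|)]
    rfl
  refine (hasSum_mul_choose_nsmul habs
    (hasSum_one_div_one_sub_rpow a ((abs_add_le x y).trans_lt hxy))).congr_fun fun p => ?_
  rw [nsmul_eq_mul, Nat.cast_add_choose]
  have := Nat.factorial_ne_zero (p.1 + p.2)
  field_simp

end PowerSeries

section Moments

lemma hasSum_integral_of_hasSum_pow {ι : Type*} [Countable ι] {μ : Measure ℝ} [IsFiniteMeasure μ]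
    (hμ : ∀ᵐ u ∂μ, |u| ≤ 1) {c : ι → ℝ} {k : ι → ℕ} {f : ℝ → ℝ}
    (hf : ∀ u, |u| ≤ 1 → HasSum (fun i => c i * u ^ k i) (f u)) :
    HasSum (fun i => c i * ∫ u, u ^ k i ∂μ) (∫ u, f u ∂μ) := by
  have hc : Summable c := by simpa using (hf 1 (by simp)).summable
  simp only [← integral_const_mul]
  refine hasSum_integral_of_dominated_convergence (fun i _ => ‖c i‖) (fun i => by fun_prop)
    (fun i => ?_) (ae_of_all _ fun _ => hc.norm) (integrable_const _) (hμ.mono hf)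
  filter_upwards [hμ] with u hu
  rw [norm_mul, norm_pow]
  exact mul_le_of_le_one_right (norm_nonneg _) (pow_le_one₀ (norm_nonneg _) hu)

lemma integral_eq_zero_of_odd {G E : Type*} [MeasurableSpace G] [AddGroup G] [MeasurableNeg G]
    [NormedAddCommGroup E] [NormedSpace ℝ E] (μ : Measure G) [μ.IsNegInvariant] {f : G → E}
    (hf : f.Odd) : ∫ x, f x ∂μ = 0 := by
  have : IsAddTorsionFree E := .of_isTorsionFree ℝ E
  rw [← self_eq_neg, ← integral_neg, ← integral_neg_eq_self f μ]
  simp only [hf _]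

lemma isNegInvariant_withDensity {G : Type*} [MeasurableSpace G] [InvolutiveNeg G] [MeasurableNeg G]
    (μ : Measure G) [μ.IsNegInvariant] {f : G → ℝ≥0∞} (hf : f.Even) :
    (μ.withDensity f).IsNegInvariant := by
  refine ⟨Measure.ext fun s hs => ?_⟩
  rw [Measure.neg_apply, withDensity_apply _ hs, withDensity_apply _ hs.neg,
    ← (Measure.measurePreserving_neg μ).setLIntegral_comp_preimage_emb
      (MeasurableEquiv.neg G).measurableEmbedding f s]
  simp only [hf _]
  rfl

lemma abs_mul_add_abs_mul_le {u v : ℝ} (A B : ℝ) (hu : |u| ≤ 1) (hv : |v| ≤ 1) :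
    |u * A| + |v * B| ≤ |A| + |B| := by
  rw [abs_mul, abs_mul]
  exact add_le_add (mul_le_of_le_one_left (abs_nonneg A) hu)
    (mul_le_of_le_one_left (abs_nonneg B) hv)

section IteratedIntegral

variable {μ ν : Measure ℝ} [IsFiniteMeasure μ] [IsFiniteMeasure ν]
  (hμ : ∀ᵐ u ∂μ, |u| ≤ 1) (hν : ∀ᵐ v ∂ν, |v| ≤ 1) {A B : ℝ} (hAB : |A| + |B| < 1) (a : ℝ)
include hμ hν hAB

lemma hasSum_integral_integral_one_div_one_sub_rpow :
    HasSum (fun p : ℕ × ℕ => (ascPochhammer ℝ (p.1 + p.2)).eval a /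
      (p.1.factorial * p.2.factorial) * (A ^ p.1 * B ^ p.2) *
      ((∫ u, u ^ p.1 ∂μ) * ∫ v, v ^ p.2 ∂ν))
      (∫ v, ∫ u, 1 / (1 - (u * A + v * B)) ^ a ∂μ ∂ν) := by
  set K : ℕ × ℕ → ℝ := fun p => (ascPochhammer ℝ (p.1 + p.2)).eval a /
    (p.1.factorial * p.2.factorial) * (A ^ p.1 * B ^ p.2) with hK
  have hexpand (u v : ℝ) (hu : |u| ≤ 1) (hv : |v| ≤ 1) :
      HasSum (fun p => K p * v ^ p.2 * u ^ p.1) (1 / (1 - (u * A + v * B)) ^ a) := by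
    have huv := (abs_mul_add_abs_mul_le A B hu hv).trans_lt hAB
    refine (hasSum_one_div_one_sub_add_rpow a huv).congr_fun fun p => ?_
    rw [hK]
    ring
  have hinner (v : ℝ) (hv : |v| ≤ 1) :
      HasSum (fun p => K p * (∫ u, u ^ p.1 ∂μ) * v ^ p.2)
        (∫ u, 1 / (1 - (u * A + v * B)) ^ a ∂μ) :=
    (hasSum_integral_of_hasSum_pow hμ fun u hu => hexpand u v hu hv).congr_fun
      fun p => mul_right_comm _ _ _
  exact (hasSum_integral_of_hasSum_pow hν hinner).congr_fun fun p => (mul_assoc _ _ _).symm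

lemma hasSum_integral_integral_one_div_one_sub_rpow_of_isNegInvariant
    [μ.IsNegInvariant] [ν.IsNegInvariant] :
    HasSum (fun p : ℕ × ℕ => (ascPochhammer ℝ (2 * (p.1 + p.2))).eval a /
      ((2 * p.1).factorial * (2 * p.2).factorial) * ((A ^ 2) ^ p.1 * (B ^ 2) ^ p.2) *
      ((∫ u, u ^ (2 * p.1) ∂μ) * ∫ v, v ^ (2 * p.2) ∂ν))
      (∫ v, ∫ u, 1 / (1 - (u * A + v * B)) ^ a ∂μ ∂ν) := by
  have hdouble : Function.Injective fun n : ℕ => 2 * n := mul_right_injective₀ two_ne_zero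
  have hodd {n : ℕ} (hn : n ∉ range fun i : ℕ => 2 * i) (ρ : Measure ℝ) [ρ.IsNegInvariant] :
      ∫ u, u ^ n ∂ρ = 0 := by
    have : Odd n := by
      rw [← Nat.not_even_iff_odd, even_iff_exists_two_mul]
      exact fun ⟨i, hi⟩ => hn ⟨i, hi.symm⟩
    exact integral_eq_zero_of_odd ρ this.neg_pow
  have h := hasSum_integral_integral_one_div_one_sub_rpow hμ hν hAB a
  rw [← (hdouble.prodMap hdouble).hasSum_iff] at h
  · simpa only [Function.comp_def, Prod.map, ← mul_add, pow_mul] using h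
  · intro p hp
    rw [range_prodMap, mem_prod, not_and_or] at hp
    rcases hp with h1 | h2
    · rw [hodd h1, zero_mul, mul_zero]
    · rw [hodd h2, mul_zero, mul_zero]

end IteratedIntegral

end Moments

section PiMeas

lemma integral_PiMeas_neg_half (f : ℝ → ℝ) :
    ∫ u, f u ∂(PiMeas (-(1 / 2))) = (f (-1) + f 1) / 2 := by
  rw [PiMeas, if_pos rfl, integral_smul_measure,
    integral_add_measure (integrable_dirac (by simp)) (integrable_dirac (by simp)), integral_dirac,
    integral_dirac, ENNReal.toReal_inv, ENNReal.toReal_ofNat, smul_eq_mul, inv_mul_eq_div]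

lemma integral_PiMeas_of_lt {ν : ℝ} (hν : -(1 / 2) < ν) (f : ℝ → ℝ) :
    ∫ u, f u ∂(PiMeas ν) = Real.Gamma (ν + 1) / (√π * Real.Gamma (ν + 1 / 2)) *
      ∫ u in Icc (-1 : ℝ) 1, f u * (1 - u ^ 2) ^ (ν - 1 / 2) := by
  have hc : 0 ≤ Real.Gamma (ν + 1) / (√π * Real.Gamma (ν + 1 / 2)) := by
    have := Real.Gamma_pos_of_pos (show 0 < ν + 1 by linarith)
    have := Real.Gamma_pos_of_pos (show 0 < ν + 1 / 2 by linarith)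
    positivity
  rw [PiMeas, if_neg hν.ne', integral_withDensity_eq_integral_toReal_smul (by fun_prop)
    (by simp), ← integral_const_mul]
  refine setIntegral_congr_fun measurableSet_Icc fun u hu => ?_
  have hu' : 0 ≤ 1 - u ^ 2 := by nlinarith [hu.1, hu.2]
  simp only [smul_eq_mul]
  rw [ENNReal.toReal_ofReal (mul_nonneg hc (Real.rpow_nonneg hu' _))]
  ring

instance isNegInvariant_PiMeas (ν : ℝ) : (PiMeas ν).IsNegInvariant := by
  rw [PiMeas]
  split_ifs
  · refine ⟨?_⟩
    rw [Measure.neg, Measure.map_smul, Measure.map_add _ _ measurable_neg,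
      Measure.map_dirac' measurable_neg, Measure.map_dirac' measurable_neg, neg_neg, add_comm]
  · rw [← withDensity_indicator_one measurableSet_Icc]
    have : (volume.withDensity ((Icc (-1 : ℝ) 1).indicator 1)).IsNegInvariant :=
      isNegInvariant_withDensity _ fun u => by
        simp only [indicator_apply, ← abs_le, abs_neg, mem_Icc, Pi.one_apply]
    exact isNegInvariant_withDensity _ fun u => by rw [neg_sq]

lemma ae_PiMeas_abs_le_one (ν : ℝ) : ∀ᵐ u ∂(PiMeas ν), |u| ≤ 1 := by
  rw [PiMeas]
  split_ifs
  · refine Measure.ae_smul_measure ?_ _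
    simp [ae_add_measure_iff, ae_dirac_eq]
  · refine (withDensity_absolutelyContinuous _ _).ae_le ?_
    filter_upwards [ae_restrict_mem measurableSet_Icc] with u hu
    exact abs_le.2 hu

variable {ν : ℝ} (hν : -(1 / 2) ≤ ν)
include hν

lemma integral_pow_even_PiMeas (n : ℕ) :
    ∫ u, u ^ (2 * n) ∂(PiMeas ν) =
      (ascPochhammer ℝ n).eval (1 / 2) / (ascPochhammer ℝ n).eval (ν + 1) := by
  rcases hν.eq_or_lt with rfl | hν
  · have hpos := ascPochhammer_pos n (1 / 2 : ℝ) (by norm_num)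
    rw [integral_PiMeas_neg_half, (even_two_mul n).neg_pow, one_pow, neg_add_eq_sub, sub_half,
      div_self hpos.ne']
    norm_num
  · have hs : 0 < ν + 1 / 2 := by linarith
    have hν1 : 0 < ν + 1 := by linarith
    have hmoment : ∫ u in Icc (-1 : ℝ) 1, u ^ (2 * n) * (1 - u ^ 2) ^ (ν - 1 / 2) =
        ProbabilityTheory.beta (1 / 2 + n) (ν + 1 / 2) := by
      rw [← integral_abs_rpow_mul_one_sub_sq_rpow (by positivity) hs]
      refine setIntegral_congr_fun measurableSet_Icc fun u _ => ?_
      have hexp : 2 * (1 / 2 + n : ℝ) - 1 = (2 * n : ℕ) := by push_cast; ring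
      simp only [hexp, Real.rpow_natCast, (even_two_mul n).pow_abs]
      ring_nf
    have hsum : 1 / 2 + n + (ν + 1 / 2) = ν + 1 + n := by ring
    rw [integral_PiMeas_of_lt hν, hmoment, ProbabilityTheory.beta, hsum,
      Gamma_add_natCast one_half_pos, Gamma_add_natCast hν1, Real.Gamma_one_half_eq]
    have hΓs := (Real.Gamma_pos_of_pos hs).ne'
    have hΓν1 := (Real.Gamma_pos_of_pos hν1).ne'
    generalize Real.Gamma (ν + 1 / 2) = Γs at hΓs ⊢
    field_simp

lemma isProbabilityMeasure_PiMeas : IsProbabilityMeasure (PiMeas ν) := by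
  have h := integral_pow_even_PiMeas hν 0
  simp only [mul_zero, pow_zero, ascPochhammer_zero, Polynomial.eval_one, div_one,
    integral_const, smul_eq_mul, mul_one] at h
  exact ⟨(ENNReal.toReal_eq_one_iff _).1 h⟩

end PiMeas

section Representation

lemma F4_half_eq_integral {α β A B : ℝ} (hα : -(1 / 2) ≤ α) (hβ : -(1 / 2) ≤ β)
    (hAB : |A| + |B| < 1) (a : ℝ) :
    F4 (a / 2) ((a + 1) / 2) (α + 1) (β + 1) (A ^ 2) (B ^ 2) =
      ∫ v, ∫ u, 1 / (1 - (u * A + v * B)) ^ a ∂(PiMeas α) ∂(PiMeas β) := by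
  have := isProbabilityMeasure_PiMeas hα
  have := isProbabilityMeasure_PiMeas hβ
  rw [F4, ← (hasSum_integral_integral_one_div_one_sub_rpow_of_isNegInvariant
    (ae_PiMeas_abs_le_one α) (ae_PiMeas_abs_le_one β) hAB a).tsum_eq]
  refine tsum_congr fun p => ?_
  rw [integral_pow_even_PiMeas hα, integral_pow_even_PiMeas hβ, ascPochhammer_eval_two_mul,
    cast_factorial_two_mul, cast_factorial_two_mul, pow_add]
  have := (ascPochhammer_pos p.1 (1 / 2 : ℝ) (by norm_num)).ne'
  have := (ascPochhammer_pos p.2 (1 / 2 : ℝ) (by norm_num)).ne'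
  field_simp

lemma abs_sin_mul_sin_add_abs_cos_mul_cos_le_one (x y : ℝ) :
    |Real.sin x * Real.sin y| + |Real.cos x * Real.cos y| ≤ 1 := by
  have amgm (a b : ℝ) : |a * b| ≤ (a ^ 2 + b ^ 2) / 2 := by
    rw [abs_mul]
    linarith [two_mul_le_add_sq |a| |b|, sq_abs a, sq_abs b]
  calc |Real.sin x * Real.sin y| + |Real.cos x * Real.cos y|
      ≤ (Real.sin x ^ 2 + Real.sin y ^ 2) / 2 + (Real.cos x ^ 2 + Real.cos y ^ 2) / 2 :=
        add_le_add (amgm _ _) (amgm _ _)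
    _ = 1 := by linear_combination (Real.sin_sq_add_cos_sq x + Real.sin_sq_add_cos_sq y) / 2

lemma Psi_eq_mul_one_div_one_sub_rpow {α β t θ φ u v A B : ℝ}
    (hA : A = Real.sin (θ / 2) * Real.sin (φ / 2) / Real.cosh (t / 2))
    (hB : B = Real.cos (θ / 2) * Real.cos (φ / 2) / Real.cosh (t / 2))
    (h : u * A + v * B ≤ 1) :
    Psi α β t θ φ u v = cab α β * Real.sinh (t / 2) / Real.cosh (t / 2) ^ (α + β + 2) *
      (1 / (1 - (u * A + v * B)) ^ (α + β + 2)) := by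
  have hcosh := Real.cosh_pos (t / 2)
  have hbase : Real.cosh (t / 2) - 1 + qf θ φ u v =
      Real.cosh (t / 2) * (1 - (u * A + v * B)) := by
    rw [qf, hA, hB]
    field_simp
    ring
  rw [Psi, hbase, Real.mul_rpow hcosh.le (sub_nonneg.2 h), div_mul_div_comm, mul_one]

end Representation

theorem jacobi_poisson_representation_high_general (α β : ℝ) (hα : -(1 / 2) ≤ α)
    (hβ : -(1 / 2) ≤ β) (t : ℝ) (ht : t ≠ 0) (θ φ : ℝ) :
    Hker α β t θ φ =
      ∫ v, (∫ u, Psi α β t θ φ u v ∂(PiMeas α)) ∂(PiMeas β) := by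
  have hcosh : 1 < Real.cosh (t / 2) := Real.one_lt_cosh.2 (by positivity)
  set A := Real.sin (θ / 2) * Real.sin (φ / 2) / Real.cosh (t / 2) with hA
  set B := Real.cos (θ / 2) * Real.cos (φ / 2) / Real.cosh (t / 2) with hB
  have hAB : |A| + |B| < 1 := by
    rw [hA, hB, abs_div, abs_div, abs_of_pos (Real.cosh_pos _), ← add_div,
      div_lt_one (by positivity)]
    exact (abs_sin_mul_sin_add_abs_cos_mul_cos_le_one _ _).trans_lt hcosh
  have hle {u v : ℝ} (hu : |u| ≤ 1) (hv : |v| ≤ 1) : u * A + v * B ≤ 1 :=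
    (add_le_add (le_abs_self _) (le_abs_self _)).trans
      ((abs_mul_add_abs_mul_le A B hu hv).trans hAB.le)
  rw [Hker, show α + β + 3 = α + β + 2 + 1 by ring, ← hA, ← hB, F4_half_eq_integral hα hβ hAB,
    ← integral_const_mul]
  refine integral_congr_ae ?_
  filter_upwards [ae_PiMeas_abs_le_one β] with v hv
  rw [← integral_const_mul]
  refine integral_congr_ae ?_
  filter_upwards [ae_PiMeas_abs_le_one α] with u hu
  exact (Psi_eq_mul_one_div_one_sub_rpow hA hB (hle hu hv)).symm

theorem jacobi_poisson_representation_high (α β : ℝ) (hα : -(1/2) ≤ α) (hβ : -(1/2) ≤ β)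
    (t : ℝ) (ht : 0 < t) (θ φ : ℝ) (hθ : θ ∈ Icc (0 : ℝ) π) (hφ : φ ∈ Icc (0 : ℝ) π) :
    Hker α β t θ φ =
      ∫ v, (∫ u, Psi α β t θ φ u v ∂(PiMeas α)) ∂(PiMeas β) :=
  jacobi_poisson_representation_high_general α β hα hβ t ht.ne' θ φ
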